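/- For k ≥ i ≥ 1, the exponential generating function D_{(i,k)}(t) = ∑_{j≥0} d_{(i,j,k)} t^j/j! equals (-t)^k/(1-e^t)^i, i.e., (-1)^{k-i} t^{k-i} (t/(e^t-1))^i, as formal power series. -/

import Mathlib

open Finset PowerSeries

/-- The sequence d_{(i,j,k)}: d_{(1,j,k)} = 0 if k > 1+j,
d_{(1,j,k)} = (-1)^j j! (-1)^{j+1-k} B_{j+1-k}/(j+1-k)! if k ≤ 1+j, and
d_{(i,j,k)} = -(1/(j+1)) ∑_{m=0}^j C(j+1,m) B_m d_{(i-1,j+1-m,k)} for i ≥ 2.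
(The value at i = 0 is irrelevant and set to 0.) -/
def suzukiD (k : ℕ) : ℕ → ℕ → ℚ
  | 0, _ => 0
  | 1, j => if 1 + j < k then 0
      else (-1) ^ j * j.factorial *
        ((-1) ^ (j + 1 - k) * bernoulli (j + 1 - k) / (j + 1 - k).factorial)
  | (i + 2), j =>
      -(1 / (j + 1 : ℚ)) *
        ∑ m ∈ Finset.range (j + 1),
          ((j + 1).choose m : ℚ) * bernoulli m * suzukiD k (i + 1) (j + 1 - m)

/-- The first exponential generating function of `suzukiD` is a shifted Bernoulli series. -/
lemma mk_suzukiD_one (n : ℕ) :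
    (PowerSeries.mk fun j => suzukiD (n + 1) 1 j / j.factorial) =
      (-(PowerSeries.X : PowerSeries ℚ)) ^ n * bernoulliPowerSeries ℚ := by
  ext j
  rw [neg_pow, mul_assoc, show (-1 : PowerSeries ℚ) ^ n = PowerSeries.C ((-1 : ℚ) ^ n) by simp,
    PowerSeries.coeff_C_mul, PowerSeries.coeff_X_pow_mul', PowerSeries.coeff_mk, suzukiD]
  by_cases h : j < n
  · rw [if_pos (by omega), if_neg (by omega)]
    simp
  · obtain ⟨m, rfl⟩ := Nat.exists_eq_add_of_le (not_lt.mp h)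
    rw [if_neg (by omega), if_pos (by omega), show n + m + 1 - (n + 1) = m by omega,
      Nat.add_sub_cancel_left, bernoulliPowerSeries, PowerSeries.coeff_mk]
    have hf : ((n + m).factorial : ℚ) ≠ 0 := by positivity
    have hs : ((-1 : ℚ) ^ m) * (-1) ^ m = 1 := by rw [← mul_pow]; simp
    simp only [Algebra.algebraMap_self, RingHom.id_apply]
    field_simp
    rw [pow_add]
    linear_combination (-1 : ℚ) ^ n * bernoulli m * hs

/-- The recursion of `suzukiD` as multiplication by the Bernoulli series, valid as soon as the
previous generating function has no constant term. -/
lemma X_mul_mk_suzukiD_add_two (k i : ℕ) (h0 : suzukiD k (i + 1) 0 = 0) :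
    PowerSeries.X * (PowerSeries.mk fun j => suzukiD k (i + 2) j / j.factorial) =
      -(bernoulliPowerSeries ℚ *
        PowerSeries.mk fun j => suzukiD k (i + 1) j / j.factorial) := by
  ext j
  cases j with
  | zero => simp [h0]
  | succ j =>
    rw [map_neg, PowerSeries.coeff_succ_X_mul, PowerSeries.coeff_mul,
      Finset.Nat.sum_antidiagonal_eq_sum_range_succ_mk, Finset.sum_range_succ]
    simp only [bernoulliPowerSeries, PowerSeries.coeff_mk, Nat.sub_self, h0, zero_div, mul_zero,
      add_zero, Algebra.algebraMap_self, RingHom.id_apply]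
    rw [suzukiD, neg_mul, neg_div, Finset.mul_sum, Finset.sum_div]
    congr 1
    refine Finset.sum_congr rfl fun m hm => ?_
    have hm : m ≤ j + 1 := (Finset.mem_range.mp hm).le
    rw [Nat.cast_choose ℚ hm, Nat.factorial_succ j]
    push_cast
    field_simp

lemma mk_suzukiD (n i : ℕ) :
    (PowerSeries.mk fun j => suzukiD (i + 1 + n) (i + 1) j / j.factorial) =
      (-(PowerSeries.X : PowerSeries ℚ)) ^ n * bernoulliPowerSeries ℚ ^ (i + 1) := by
  induction i generalizing n with
  | zero => simpa [add_comm] using mk_suzukiD_one n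
  | succ i ih =>
    have hprev := ih (n + 1)
    rw [show i + 1 + (n + 1) = i + 1 + 1 + n by ring] at hprev
    have h0 : suzukiD (i + 1 + 1 + n) (i + 1) 0 = 0 := by
      simpa using congrArg PowerSeries.constantCoeff hprev
    have hrec := X_mul_mk_suzukiD_add_two _ _ h0
    rw [hprev] at hrec
    refine mul_left_cancel₀ PowerSeries.X_ne_zero (hrec.trans ?_)
    ring

/-- for k ≥ i ≥ 1, D_{(i,k)}(t) = ∑_{j≥0} d_{(i,j,k)} t^j/j! equals
(-t)^k/(1-e^t)^i, i.e. D_{(i,k)}(t)·(1-e^t)^i = (-t)^k as formal power series. -/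
theorem stmt7 (k i : ℕ) (hi : 1 ≤ i) (hik : i ≤ k) :
    (PowerSeries.mk fun j => suzukiD k i j / j.factorial) * (1 - PowerSeries.exp ℚ) ^ i =
      (-(PowerSeries.X : PowerSeries ℚ)) ^ k := by
  obtain ⟨i, rfl⟩ := Nat.exists_eq_add_of_le' hi
  obtain ⟨n, rfl⟩ := Nat.exists_eq_add_of_le hik
  have hB : bernoulliPowerSeries ℚ * (1 - PowerSeries.exp ℚ) = -PowerSeries.X := by
    rw [← bernoulliPowerSeries_mul_exp_sub_one ℚ]
    ring
  rw [mk_suzukiD, mul_assoc, ← mul_pow, hB, ← pow_add, add_comm n]
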